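/- For all smooth vector fields X, Y on U and all p ∈ U, the curvature of the projected covariant derivative satisfies R(X,Y)f₁ := ∇_X(∇_Y f₁)(p) − ∇_Y(∇_X f₁)(p) − ∇_{[X,Y]} f₁(p) = 0 and R(X,Y)f₂ := ∇_X(∇_Y f₂)(p) − ∇_Y(∇_X f₂)(p) − ∇_{[X,Y]} f₂(p) = (dA_p(X(p))·dα_p(Y(p)) − dA_p(Y(p))·dα_p(X(p)))·f₁(p); that is, the curvature tensor of ∇ is R = dA∧dα ⊗ f² ⊗ f₁, and the Gaussian curvature is K = ⟨R(f₁,f₂)f₂, f₁⟩ = (dA∧dα)(f₁,f₂). -/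

import Mathlib

open Real MeasureTheory

noncomputable section

/-- The Heisenberg group `ℍ¹` in exponential coordinates, as `ℝ³`. -/
abbrev H3 : Type := Fin 3 → ℝ

/-- Left invariant vector field `e₀`. -/
def E0 : H3 → H3 := fun _ => ![0, 0, 1]

/-- Left invariant vector field `e₁`. -/
def E1 : H3 → H3 := fun p => ![1, 0, -p 1 / 2]

/-- Left invariant vector field `e₂`. -/
def E2 : H3 → H3 := fun p => ![0, 1, p 0 / 2]

/-- Dual coframe element `e⁰` (the contact form). -/
def e0' (p v : H3) : ℝ := v 2 + (p 1 * v 0 - p 0 * v 1) / 2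

/-- Dual coframe element `e¹`. -/
def e1' (_p v : H3) : ℝ := v 0

/-- Dual coframe element `e²`. -/
def e2' (_p v : H3) : ℝ := v 1

/-- Lie bracket of vector fields on `ℝ³`. -/
def lie (V W : H3 → H3) (p : H3) : H3 :=
  fderiv ℝ W p (V p) - fderiv ℝ V p (W p)

/-- The adapted covariant derivative `∇̄_X Y`, for which the left invariant
frame `e₀, e₁, e₂` is parallel. -/
def nablaBar (X Y : H3 → H3) (p : H3) : H3 :=
  fderiv ℝ (fun q => e0' q (Y q)) p (X p) • E0 p
  + fderiv ℝ (fun q => Y q 0) p (X p) • E1 p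
  + fderiv ℝ (fun q => Y q 1) p (X p) • E2 p

/-- The horizontal normal `η = cos α · e₁ + sin α · e₂`. -/
def eta (α : H3 → ℝ) (p : H3) : H3 := cos (α p) • E1 p + sin (α p) • E2 p

/-- The characteristic field `f₁ = −sin α · e₁ + cos α · e₂`. -/
def F1 (α : H3 → ℝ) (p : H3) : H3 := (-sin (α p)) • E1 p + cos (α p) • E2 p

/-- The field `f₂ = e₀ + A·η`. -/
def F2 (α A : H3 → ℝ) (p : H3) : H3 := E0 p + A p • eta α p

/-- The horizontal conormal `η* = cos α · e¹ + sin α · e² − A·e⁰`. -/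
def etaStar (α A : H3 → ℝ) (p v : H3) : ℝ :=
  cos (α p) * e1' p v + sin (α p) * e2' p v - A p * e0' p v

/-- The 1-form `f¹ = −sin α · e¹ + cos α · e²`. -/
def f1' (α : H3 → ℝ) (p v : H3) : ℝ := -sin (α p) * e1' p v + cos (α p) * e2' p v

/-- The 1-form `f² = e⁰`. -/
def f2' (p v : H3) : ℝ := e0' p v

/-- The projected covariant derivative `∇_X Y = ∇̄_X Y − η*(∇̄_X Y)·η`. -/
def nablaP (α A : H3 → ℝ) (X Y : H3 → H3) (p : H3) : H3 :=
  nablaBar X Y p - etaStar α A p (nablaBar X Y p) • eta α p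

/-!
The characteristic field `f₁` is `∇`-parallel, which gives `R(X, Y) f₁ = 0`. Hence along a field `Z`
with `∇_X Z = ω(X) f₁` the connection differentiates like a scalar: `R(X, Y) Z = dω(X, Y) f₁`. For
`Z = f₂` the form is `ω = A dα`, and `d(A dα) = dA ∧ dα` since `d²α = 0`.
-/

open scoped Topology

section TwoForms

variable {𝕜 E F : Type*} [NontriviallyNormedField 𝕜] [NormedAddCommGroup E] [NormedSpace 𝕜 E]
  [NormedAddCommGroup F] [NormedSpace 𝕜 F]

theorem fderiv_smul_fderiv_sub_swap {A : E → 𝕜} {α : E → F} {p : E} (hA : DifferentiableAt 𝕜 A p)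
    (hα : DifferentiableAt 𝕜 (fderiv 𝕜 α) p) (hsymm : IsSymmSndFDerivAt 𝕜 α p) (v w : E) :
    fderiv 𝕜 (fun q => A q • fderiv 𝕜 α q) p v w - fderiv 𝕜 (fun q => A q • fderiv 𝕜 α q) p w v =
      fderiv 𝕜 A p v • fderiv 𝕜 α p w - fderiv 𝕜 A p w • fderiv 𝕜 α p v := by
  simp only [fderiv_fun_smul hA hα, add_apply, smul_apply, ContinuousLinearMap.smulRight_apply,
    hsymm.eq v w]
  abel

end TwoForms

section Frame

theorem e0'_frame (p : H3) (b₀ b₁ b₂ : ℝ) : e0' p (b₀ • E0 p + b₁ • E1 p + b₂ • E2 p) = b₀ := by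
  simp only [e0', E0, E1, E2, Pi.add_apply, Pi.smul_apply, smul_eq_mul, Matrix.cons_val]
  ring

theorem e1'_frame (p : H3) (b₀ b₁ b₂ : ℝ) : e1' p (b₀ • E0 p + b₁ • E1 p + b₂ • E2 p) = b₁ := by
  simp [e1', E0, E1, E2]

theorem e2'_frame (p : H3) (b₀ b₁ b₂ : ℝ) : e2' p (b₀ • E0 p + b₁ • E1 p + b₂ • E2 p) = b₂ := by
  simp [e2', E0, E1, E2]

theorem frame_expansion (p v : H3) : e0' p v • E0 p + e1' p v • E1 p + e2' p v • E2 p = v := by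
  ext i
  fin_cases i <;> dsimp [e0', e1', e2', E0, E1, E2] <;> ring

theorem eta_eq_frame (α : H3 → ℝ) (p : H3) :
    eta α p = (0 : ℝ) • E0 p + cos (α p) • E1 p + sin (α p) • E2 p := by
  rw [eta, zero_smul, zero_add]

theorem F1_eq_frame (α : H3 → ℝ) (p : H3) :
    F1 α p = (0 : ℝ) • E0 p + (-sin (α p)) • E1 p + cos (α p) • E2 p := by
  rw [F1, zero_smul, zero_add]

theorem F2_eq_frame (α A : H3 → ℝ) (p : H3) :
    F2 α A p = (1 : ℝ) • E0 p + (A p * cos (α p)) • E1 p + (A p * sin (α p)) • E2 p := by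
  rw [F2, eta]
  module

theorem etaStar_add (α A : H3 → ℝ) (p v w : H3) :
    etaStar α A p (v + w) = etaStar α A p v + etaStar α A p w := by
  simp only [etaStar, e0', e1', e2', Pi.add_apply]
  ring

theorem etaStar_smul (α A : H3 → ℝ) (p : H3) (c : ℝ) (v : H3) :
    etaStar α A p (c • v) = c * etaStar α A p v := by
  simp only [etaStar, e0', e1', e2', Pi.smul_apply, smul_eq_mul]
  ring

theorem etaStar_eta (α A : H3 → ℝ) (p : H3) : etaStar α A p (eta α p) = 1 := by
  rw [eta_eq_frame, etaStar, e0'_frame, e1'_frame, e2'_frame]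
  linear_combination cos_sq_add_sin_sq (α p)

theorem etaStar_F1 (α A : H3 → ℝ) (p : H3) : etaStar α A p (F1 α p) = 0 := by
  rw [F1_eq_frame, etaStar, e0'_frame, e1'_frame, e2'_frame]
  ring

theorem differentiable_E1 : Differentiable ℝ E1 := by
  refine differentiable_pi.2 (Fin.forall_fin_succ.2 ⟨?_, Fin.forall_fin_two.2 ⟨?_, ?_⟩⟩) <;>
    (dsimp [E1]; fun_prop)

theorem differentiable_E2 : Differentiable ℝ E2 := by
  refine differentiable_pi.2 (Fin.forall_fin_succ.2 ⟨?_, Fin.forall_fin_two.2 ⟨?_, ?_⟩⟩) <;>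
    (dsimp [E2]; fun_prop)

theorem differentiableAt_F1 {α : H3 → ℝ} {p : H3} (hα : DifferentiableAt ℝ α p) :
    DifferentiableAt ℝ (F1 α) p := by
  have hE1 := differentiable_E1
  have hE2 := differentiable_E2
  unfold F1
  fun_prop

end Frame

section AdaptedConnection

variable {α A : H3 → ℝ} {p : H3}

theorem nablaBar_eq_coframe (X Y : H3 → H3) (p : H3) :
    nablaBar X Y p = fderiv ℝ (fun q => e0' q (Y q)) p (X p) • E0 p +
      fderiv ℝ (fun q => e1' q (Y q)) p (X p) • E1 p +
      fderiv ℝ (fun q => e2' q (Y q)) p (X p) • E2 p :=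
  rfl

theorem nablaBar_frame (X : H3 → H3) (b₀ b₁ b₂ : H3 → ℝ) (p : H3) :
    nablaBar X (fun q => b₀ q • E0 q + b₁ q • E1 q + b₂ q • E2 q) p =
      fderiv ℝ b₀ p (X p) • E0 p + fderiv ℝ b₁ p (X p) • E1 p + fderiv ℝ b₂ p (X p) • E2 p := by
  simp only [nablaBar_eq_coframe, e0'_frame, e1'_frame, e2'_frame]

theorem nablaBar_smul {g : H3 → ℝ} {Y : H3 → H3} (X : H3 → H3) (hg : DifferentiableAt ℝ g p)
    (hY : DifferentiableAt ℝ Y p) :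
    nablaBar X (fun q => g q • Y q) p = fderiv ℝ g p (X p) • Y p + g p • nablaBar X Y p := by
  have hY₀ : DifferentiableAt ℝ (fun q => e0' q (Y q)) p := by
    unfold e0'
    fun_prop
  have hY₁ : DifferentiableAt ℝ (fun q => e1' q (Y q)) p := differentiableAt_pi.1 hY 0
  have hY₂ : DifferentiableAt ℝ (fun q => e2' q (Y q)) p := differentiableAt_pi.1 hY 1
  have hgY (q : H3) : g q • Y q = (g q * e0' q (Y q)) • E0 q + (g q * e1' q (Y q)) • E1 q +
      (g q * e2' q (Y q)) • E2 q := by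
    nth_rw 1 [← frame_expansion q (Y q)]
    module
  rw [funext hgY, nablaBar_frame, fderiv_fun_mul hg hY₀, fderiv_fun_mul hg hY₁,
    fderiv_fun_mul hg hY₂]
  simp only [nablaBar_eq_coframe, add_apply, smul_apply, smul_eq_mul]
  linear_combination (norm := module) fderiv ℝ g p (X p) • frame_expansion p (Y p)

theorem nablaBar_F1 (X : H3 → H3) (hα : DifferentiableAt ℝ α p) :
    nablaBar X (F1 α) p = (-fderiv ℝ α p (X p)) • eta α p := by
  rw [funext (F1_eq_frame α), nablaBar_frame, eta, fderiv_fun_neg, fderiv_sin hα, fderiv_cos hα]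
  simp only [fderiv_fun_const, Pi.zero_apply, zero_apply, neg_apply, smul_apply, smul_eq_mul]
  module

theorem nablaBar_F2 (X : H3 → H3) (hα : DifferentiableAt ℝ α p) (hA : DifferentiableAt ℝ A p) :
    nablaBar X (F2 α A) p =
      fderiv ℝ A p (X p) • eta α p + (A p * fderiv ℝ α p (X p)) • F1 α p := by
  rw [funext (F2_eq_frame α A), nablaBar_frame, eta, F1, fderiv_fun_mul hA hα.cos,
    fderiv_fun_mul hA hα.sin, fderiv_sin hα, fderiv_cos hα]
  simp only [fderiv_fun_const, Pi.zero_apply, zero_apply, add_apply, smul_apply, smul_eq_mul]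
  module

end AdaptedConnection

section ProjectedConnection

variable {α A : H3 → ℝ} {Y Z : H3 → H3} {p : H3}

theorem nablaP_congr (X : H3 → H3) (h : Y =ᶠ[𝓝 p] Z) : nablaP α A X Y p = nablaP α A X Z p := by
  have hcoord (θ : H3 → H3 → ℝ) : (fun q => θ q (Y q)) =ᶠ[𝓝 p] fun q => θ q (Z q) :=
    h.mono fun q hq => congrArg (θ q) hq
  simp only [nablaP, nablaBar_eq_coframe, (hcoord _).fderiv_eq]

theorem nablaP_zero (α A : H3 → ℝ) (X : H3 → H3) (p : H3) : nablaP α A X (fun _ => 0) p = 0 := by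
  simp [nablaP, nablaBar, etaStar, e0', e1', e2']

theorem etaStar_nablaP (α A : H3 → ℝ) (X Y : H3 → H3) (p : H3) :
    etaStar α A p (nablaP α A X Y p) = 0 := by
  rw [nablaP, sub_eq_add_neg, ← neg_smul, etaStar_add, etaStar_smul, etaStar_eta]
  ring

theorem nablaP_eq_of_nablaBar_eq {X : H3 → H3} {c : ℝ} {v : H3} (hv : etaStar α A p v = 0)
    (h : nablaBar X Y p = c • eta α p + v) : nablaP α A X Y p = v := by
  rw [nablaP, h, etaStar_add, etaStar_smul, etaStar_eta, hv]
  module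

theorem nablaP_smul {g : H3 → ℝ} (X : H3 → H3) (hg : DifferentiableAt ℝ g p)
    (hY : DifferentiableAt ℝ Y p) (htan : etaStar α A p (Y p) = 0) :
    nablaP α A X (fun q => g q • Y q) p =
      fderiv ℝ g p (X p) • Y p + g p • nablaP α A X Y p := by
  refine nablaP_eq_of_nablaBar_eq (c := g p * etaStar α A p (nablaBar X Y p)) ?_ ?_
  · simp only [etaStar_add, etaStar_smul, htan, etaStar_nablaP, mul_zero, add_zero]
  · rw [nablaBar_smul X hg hY, nablaP]
    module

theorem nablaP_F1 (A : H3 → ℝ) (X : H3 → H3) (hα : DifferentiableAt ℝ α p) :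
    nablaP α A X (F1 α) p = 0 := by
  rw [nablaP, nablaBar_F1 X hα, etaStar_smul, etaStar_eta, mul_one, sub_self]

theorem nablaP_F2 (X : H3 → H3) (hα : DifferentiableAt ℝ α p) (hA : DifferentiableAt ℝ A p) :
    nablaP α A X (F2 α A) p = (A p * fderiv ℝ α p (X p)) • F1 α p := by
  refine nablaP_eq_of_nablaBar_eq ?_ (nablaBar_F2 X hα hA)
  rw [etaStar_smul, etaStar_F1, mul_zero]

theorem nablaP_smul_F1 {g : H3 → ℝ} (A : H3 → ℝ) (X : H3 → H3) (hα : DifferentiableAt ℝ α p)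
    (hg : DifferentiableAt ℝ g p) :
    nablaP α A X (fun q => g q • F1 α q) p = fderiv ℝ g p (X p) • F1 α p := by
  rw [nablaP_smul X hg (differentiableAt_F1 hα) (etaStar_F1 α A p), nablaP_F1 A X hα, smul_zero,
    add_zero]

end ProjectedConnection

section Curvature

/-- The curvature `R(X, Y)Z = ∇_X ∇_Y Z - ∇_Y ∇_X Z - ∇_{[X, Y]} Z` of the projected covariant
derivative, as an operator on vector fields. -/
def curvatureP (α A : H3 → ℝ) (X Y Z : H3 → H3) (p : H3) : H3 :=
  nablaP α A X (nablaP α A Y Z) p - nablaP α A Y (nablaP α A X Z) p - nablaP α A (lie X Y) Z p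

variable {α A : H3 → ℝ} {X Y Z : H3 → H3} {p : H3}

theorem nablaP_nablaP_of_eq_smul_F1 {ω : H3 → H3 →L[ℝ] ℝ}
    (hα : DifferentiableAt ℝ α p) (hω : DifferentiableAt ℝ ω p) (hY : DifferentiableAt ℝ Y p)
    (hZ : ∀ᶠ q in 𝓝 p, nablaP α A Y Z q = ω q (Y q) • F1 α q) :
    nablaP α A X (nablaP α A Y Z) p =
      (fderiv ℝ ω p (X p) (Y p) + ω p (fderiv ℝ Y p (X p))) • F1 α p := by
  rw [nablaP_congr X hZ, nablaP_smul_F1 A X hα (hω.clm_apply hY), fderiv_clm_apply hω hY, add_comm]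
  rfl

theorem curvatureP_of_nablaP_eq_smul_F1 {ω : H3 → H3 →L[ℝ] ℝ}
    (hα : DifferentiableAt ℝ α p) (hω : DifferentiableAt ℝ ω p)
    (hX : DifferentiableAt ℝ X p) (hY : DifferentiableAt ℝ Y p)
    (hZ : ∀ᶠ q in 𝓝 p, ∀ W : H3 → H3, nablaP α A W Z q = ω q (W q) • F1 α q) :
    curvatureP α A X Y Z p =
      (fderiv ℝ ω p (X p) (Y p) - fderiv ℝ ω p (Y p) (X p)) • F1 α p := by
  rw [curvatureP, nablaP_nablaP_of_eq_smul_F1 hα hω hY (hZ.mono fun q hq => hq Y),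
    nablaP_nablaP_of_eq_smul_F1 hα hω hX (hZ.mono fun q hq => hq X), hZ.self_of_nhds, lie,
    map_sub]
  module

theorem curvatureP_F1 (A : H3 → ℝ) (X Y : H3 → H3) (hα : ∀ᶠ q in 𝓝 p, DifferentiableAt ℝ α q) :
    curvatureP α A X Y (F1 α) p = 0 := by
  have hparallel (V W : H3 → H3) : nablaP α A V (nablaP α A W (F1 α)) p = 0 := by
    rw [nablaP_congr V (hα.mono fun q hq => nablaP_F1 A W hq), nablaP_zero]
  rw [curvatureP, hparallel, hparallel, nablaP_F1 A _ hα.self_of_nhds, sub_self, sub_self]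

theorem curvatureP_F2 (hα : ContDiffAt ℝ 2 α p) (hA : ∀ᶠ q in 𝓝 p, DifferentiableAt ℝ A q)
    (hX : DifferentiableAt ℝ X p) (hY : DifferentiableAt ℝ Y p) :
    curvatureP α A X Y (F2 α A) p =
      (fderiv ℝ A p (X p) * fderiv ℝ α p (Y p) - fderiv ℝ A p (Y p) * fderiv ℝ α p (X p)) •
        F1 α p := by
  have hF2 : ∀ᶠ q in 𝓝 p, ∀ W : H3 → H3,
      nablaP α A W (F2 α A) q = (A q • fderiv ℝ α q) (W q) • F1 α q := by
    filter_upwards [hα.eventually (by simp), hA] with q hαq hAq W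
    exact nablaP_F2 W (hαq.differentiableAt two_ne_zero) hAq
  have hdα : DifferentiableAt ℝ (fderiv ℝ α) p :=
    (hα.fderiv_right (m := 1) one_add_one_eq_two.le).differentiableAt one_ne_zero
  have hsymm : IsSymmSndFDerivAt ℝ α p := hα.isSymmSndFDerivAt (by simp)
  rw [curvatureP_of_nablaP_eq_smul_F1 (hα.differentiableAt two_ne_zero)
    (hA.self_of_nhds.fun_smul hdα) hX hY hF2,
    fderiv_smul_fderiv_sub_swap hA.self_of_nhds hdα hsymm, smul_eq_mul, smul_eq_mul]

theorem nablaP_curvature_general (hα : ContDiffAt ℝ 2 α p)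
    (hA : ∀ᶠ q in 𝓝 p, DifferentiableAt ℝ A q)
    (hX : DifferentiableAt ℝ X p) (hY : DifferentiableAt ℝ Y p) :
    curvatureP α A X Y (F1 α) p = 0 ∧
      curvatureP α A X Y (F2 α A) p =
        (fderiv ℝ A p (X p) * fderiv ℝ α p (Y p) - fderiv ℝ A p (Y p) * fderiv ℝ α p (X p)) •
          F1 α p :=
  ⟨curvatureP_F1 A X Y <|
    (hα.eventually (by simp)).mono fun _ hq => hq.differentiableAt two_ne_zero,
    curvatureP_F2 hα hA hX hY⟩

end Curvature

/-- The curvature tensor of the projected covariant derivative is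
`R = dA∧dα ⊗ f² ⊗ f₁`: it kills `f₁` and sends `f₂` to `(dA∧dα)(X,Y)·f₁`. -/
theorem nablaP_curvature (U : Set H3) (hU : IsOpen U) (α A : H3 → ℝ)
    (hα : ContDiffOn ℝ (⊤ : ℕ∞) α U) (hA : ContDiffOn ℝ (⊤ : ℕ∞) A U)
    (X Y : H3 → H3) (hX : ContDiffOn ℝ (⊤ : ℕ∞) X U) (hY : ContDiffOn ℝ (⊤ : ℕ∞) Y U) :
    ∀ p ∈ U,
      (nablaP α A X (fun q => nablaP α A Y (F1 α) q) p
          - nablaP α A Y (fun q => nablaP α A X (F1 α) q) p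
          - nablaP α A (lie X Y) (F1 α) p = 0)
      ∧ (nablaP α A X (fun q => nablaP α A Y (F2 α A) q) p
          - nablaP α A Y (fun q => nablaP α A X (F2 α A) q) p
          - nablaP α A (lie X Y) (F2 α A) p
        = (fderiv ℝ A p (X p) * fderiv ℝ α p (Y p)
            - fderiv ℝ A p (Y p) * fderiv ℝ α p (X p)) • F1 α p) := by
  intro p hp
  have hU' : U ∈ 𝓝 p := hU.mem_nhds hp
  exact nablaP_curvature_general ((hα.contDiffAt hU').of_le (by norm_cast))
    ((hA.differentiableOn (by simp)).eventually_differentiableAt hU')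
    ((hX.differentiableOn (by simp)).differentiableAt hU')
    ((hY.differentiableOn (by simp)).differentiableAt hU')
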